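/- arXiv:1312.1939 — 2 statements merged into one kernel-verified Lean document; each statement's English description precedes it below -/
import Mathlib

section
/- Let λ > 0 and q₋ < 0 < q₊. As ε → 0⁺, the conditional law Law[τ_ε − (1/λ)·ln(1/ε) | C_ε] converges weakly to the law of (1/λ)·ln(q₊) + (1/(2λ))·ln(2λ) + (1/λ)·Θ, where Θ = −ln|N| and N is a standard Gaussian random variable. -/
open MeasureTheory ProbabilityTheory Filter Topology Set

/-- `B` is a standard Brownian motion (for times `t ≥ 0`) on the probability space `(Ω, P)`. -/
def IsBrownianMotion {Ω : Type*} [MeasurableSpace Ω] (P : Measure Ω) (B : ℝ → Ω → ℝ) : Prop :=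
  (∀ t : ℝ, Measurable (B t)) ∧
  (∀ᵐ ω ∂P, B 0 ω = 0 ∧ ContinuousOn (fun t => B t ω) (Set.Ici (0 : ℝ))) ∧
  (∀ s t : ℝ, 0 ≤ s → s ≤ t →
    Measure.map (fun ω => B t ω - B s ω) P = gaussianReal 0 (Real.toNNReal (t - s))) ∧
  (∀ t : ℕ → ℝ, Monotone t → (∀ i, 0 ≤ t i) →
    iIndepFun (fun i ω => B (t (i + 1)) ω - B (t i) ω) P)

/-!
The process is `X_ε(t) = ε e^{λt} W(t)` with `W(t) = B((1 - e^{-2λt}) / (2λ))`, and almost surely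
`W(t) → Z = B(1 / (2λ)) ≠ 0` as `t → ∞`. As `ε → 0⁺`, `X_ε` tends to `0` uniformly on bounded time
intervals, so `τ_ε → ∞` and `W(τ_ε) → Z`: for small `ε` the exit happens at `q₊` exactly when
`Z > 0`. In that case taking logarithms in `ε e^{λτ_ε} W(τ_ε) = q₊` gives
`τ_ε - (1/λ) ln (1/ε) = (1/λ) (ln q₊ - ln W(τ_ε)) → (1/λ) (ln q₊ - ln Z)`. Dominated convergence
turns this pathwise limit into weak convergence of the conditional laws, and by symmetry of the
Gaussian law, `Z` conditioned on `Z > 0` is distributed as `|Z|`, hence as `|N| / √(2λ)`.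
-/

section HittingTimes

variable {E : Type*}

/-- The nonnegative times at which the path `g` lies in `F`. -/
def hitTimes (g : ℝ → E) (F : Set E) : Set ℝ := {t | 0 ≤ t ∧ g t ∈ F}

/-- The first nonnegative time at which the path `g` lies in `F`. It has the junk value `0` when
`g` never hits `F`. -/
noncomputable def firstHitTime (g : ℝ → E) (F : Set E) : ℝ := sInf (hitTimes g F)

lemma firstHitTime_nonneg (g : ℝ → E) (F : Set E) : 0 ≤ firstHitTime g F :=
  Real.sInf_nonneg fun _ ht => ht.1

lemma firstHitTime_le {g : ℝ → E} {F : Set E} {t : ℝ} (ht : t ∈ hitTimes g F) :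
    firstHitTime g F ≤ t :=
  csInf_le ⟨0, fun _ hs => hs.1⟩ ht

lemma hitTimes_congr {g g' : ℝ → E} (h : EqOn g g' (Ici 0)) (F : Set E) :
    hitTimes g F = hitTimes g' F := by
  ext t
  exact and_congr_right fun ht => by rw [h ht]

lemma firstHitTime_mem_hitTimes [TopologicalSpace E] {g : ℝ → E} (hg : ContinuousOn g (Ici 0))
    {F : Set E} (hF : IsClosed F) (hne : (hitTimes g F).Nonempty) :
    firstHitTime g F ∈ hitTimes g F :=
  (hg.preimage_isClosed_of_isClosed isClosed_Ici hF).csInf_mem hne ⟨0, fun _ ht => ht.1⟩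

lemma hitTimes_pair_nonempty {g : ℝ → ℝ} (hg : ContinuousOn g (Ici 0)) {a b : ℝ}
    (h0 : g 0 ∈ Icc a b) (hinf : Tendsto (fun t => |g t|) atTop atTop) :
    (hitTimes g {a, b}).Nonempty := by
  obtain ⟨t, hmax, ht⟩ :=
    ((hinf.eventually_ge_atTop (max |a| |b|)).and (eventually_ge_atTop 0)).exists
  have hgt : ContinuousOn g (Icc 0 t) := hg.mono Icc_subset_Ici_self
  rcases le_total 0 (g t) with hpos | hneg
  · have hb : b ≤ g t := by
      rw [abs_of_nonneg hpos] at hmax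
      exact (le_abs_self b).trans ((le_max_right _ _).trans hmax)
    obtain ⟨s, hs, hsb⟩ := intermediate_value_Icc ht hgt ⟨h0.2, hb⟩
    exact ⟨s, hs.1, Or.inr hsb⟩
  · have ha : g t ≤ a := by
      rw [abs_of_nonpos hneg] at hmax
      linarith [neg_abs_le a, le_max_left |a| |b|]
    obtain ⟨s, hs, hsa⟩ := intermediate_value_Icc' ht hgt ⟨ha, h0.1⟩
    exact ⟨s, hs.1, Or.inl hsa⟩

lemma tendsto_firstHitTime_atTop [UniformSpace E] {ι : Type*} {l : Filter ι} {g : ι → ℝ → E}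
    {x : E} {F : Set E} (hF : Fᶜ ∈ 𝓝 x)
    (hg : ∀ T, TendstoUniformlyOn g (fun _ => x) l (Icc 0 T))
    (hne : ∀ᶠ i in l, (hitTimes (g i) F).Nonempty) :
    Tendsto (fun i => firstHitTime (g i) F) l atTop := by
  refine tendsto_atTop.2 fun T => ?_
  obtain ⟨V, hV, hVF⟩ := UniformSpace.mem_nhds_iff.1 hF
  filter_upwards [hg T V hV, hne] with i hi hne
  refine le_csInf hne fun t ⟨ht0, htF⟩ => ?_
  by_contra! htT
  exact hVF (hi t ⟨ht0, htT.le⟩) htF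

end HittingTimes

section Measurability

variable {Ω E : Type*} [MeasurableSpace Ω]

/-- With a countable `S`, this makes the existence of a hitting time a measurable event. -/
lemma exists_mem_iff_iInf_infEDist_eq_zero [PseudoEMetricSpace E] {K : Type*} [TopologicalSpace K]
    [CompactSpace K] {S : Set K} (hS : Dense S) {g : K → E} (hg : Continuous g) {F : Set E}
    (hF : IsClosed F) : (∃ x, g x ∈ F) ↔ ⨅ s : S, Metric.infEDist (g s) F = 0 := by
  have hcont : Continuous fun x => Metric.infEDist (g x) F := Metric.continuous_infEDist.comp hg
  simp_rw [hS.ciInf' hcont, Metric.mem_iff_infEDist_zero_of_closed hF]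
  refine ⟨fun ⟨x, hx⟩ => le_antisymm ((iInf_le _ x).trans hx.le) bot_le, fun h => ?_⟩
  rcases isEmpty_or_nonempty K with hK | hK
  · exact absurd h (by simp [iInf_of_empty])
  obtain ⟨x, -, hx⟩ := isCompact_univ.exists_isMinOn univ_nonempty hcont.continuousOn
  exact ⟨x, le_antisymm (h ▸ le_iInf fun y => hx (mem_univ y)) bot_le⟩

lemma measurableSet_exists_mem_Icc [PseudoEMetricSpace E] [MeasurableSpace E]
    [OpensMeasurableSpace E] {Y : ℝ → Ω → E} (hm : ∀ t, Measurable (Y t))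
    (hc : ∀ ω, Continuous fun t => Y t ω) {F : Set E} (hF : IsClosed F) (T : ℝ) :
    MeasurableSet {ω | ∃ t ∈ Icc 0 T, Y t ω ∈ F} := by
  obtain ⟨S, hScount, hSdense⟩ := TopologicalSpace.exists_countable_dense (Icc (0 : ℝ) T)
  have := hScount.to_subtype
  have hiInf : {ω | ∃ t ∈ Icc 0 T, Y t ω ∈ F}
      = {ω | ⨅ s : S, Metric.infEDist (Y (s : Icc (0 : ℝ) T) ω) F = 0} := by
    ext ω
    simpa using exists_mem_iff_iInf_infEDist_eq_zero hSdense
      ((hc ω).comp continuous_subtype_val) hF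
  rw [hiInf]
  exact (Measurable.iInf fun s : S => measurable_infEDist.comp (hm _)) (measurableSet_singleton 0)

lemma measurableSet_hitTimes_nonempty [PseudoEMetricSpace E] [MeasurableSpace E]
    [OpensMeasurableSpace E] {Y : ℝ → Ω → E} (hm : ∀ t, Measurable (Y t))
    (hc : ∀ ω, Continuous fun t => Y t ω) {F : Set E} (hF : IsClosed F) :
    MeasurableSet {ω | (hitTimes (fun t => Y t ω) F).Nonempty} := by
  have hUnion : {ω | (hitTimes (fun t => Y t ω) F).Nonempty}
      = ⋃ n : ℕ, {ω | ∃ t ∈ Icc 0 (n : ℝ), Y t ω ∈ F} := by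
    ext ω
    simp only [mem_ofPred_eq, mem_iUnion]
    constructor
    · rintro ⟨t, ht0, htF⟩
      obtain ⟨n, hn⟩ := exists_nat_ge t
      exact ⟨n, t, ⟨ht0, hn⟩, htF⟩
    · rintro ⟨n, t, ht, htF⟩
      exact ⟨t, ht.1, htF⟩
  rw [hUnion]
  exact MeasurableSet.iUnion fun n => measurableSet_exists_mem_Icc hm hc hF n

lemma firstHitTime_le_iff [TopologicalSpace E] {g : ℝ → E} (hg : ContinuousOn g (Ici 0))
    {F : Set E} (hF : IsClosed F) {T : ℝ} (hT : 0 ≤ T) :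
    firstHitTime g F ≤ T ↔ (∃ t ∈ Icc 0 T, g t ∈ F) ∨ ¬ (hitTimes g F).Nonempty := by
  constructor
  · refine fun hle => or_not_of_imp fun hne => ?_
    obtain ⟨h0, hmem⟩ := firstHitTime_mem_hitTimes hg hF hne
    exact ⟨_, ⟨h0, hle⟩, hmem⟩
  · rintro (⟨t, ht, htF⟩ | hempty)
    · exact (firstHitTime_le ⟨ht.1, htF⟩).trans ht.2
    · rwa [firstHitTime, not_nonempty_iff_eq_empty.1 hempty, Real.sInf_empty]

lemma measurable_firstHitTime [PseudoEMetricSpace E] [MeasurableSpace E]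
    [OpensMeasurableSpace E] {Y : ℝ → Ω → E} (hm : ∀ t, Measurable (Y t))
    (hc : ∀ ω, Continuous fun t => Y t ω) {F : Set E} (hF : IsClosed F) :
    Measurable fun ω => firstHitTime (fun t => Y t ω) F := by
  refine measurable_of_Iic fun T => ?_
  rcases lt_or_ge T 0 with hT | hT
  · convert MeasurableSet.empty
    exact eq_empty_of_forall_notMem fun ω hω =>
      (hT.trans_le (firstHitTime_nonneg _ _)).not_ge hω
  · simp only [preimage, mem_Iic, firstHitTime_le_iff (hc _).continuousOn hF hT]
    exact (measurableSet_exists_mem_Icc hm hc hF T).union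
      (measurableSet_hitTimes_nonempty hm hc hF).compl

lemma measurable_apply_firstHitTime [PseudoEMetricSpace E] [MeasurableSpace E] [BorelSpace E]
    {Y : ℝ → Ω → E} (hm : ∀ t, Measurable (Y t)) (hc : ∀ ω, Continuous fun t => Y t ω)
    {F : Set E} (hF : IsClosed F) :
    Measurable fun ω => Y (firstHitTime (fun t => Y t ω) F) ω :=
  (measurable_uncurry_of_continuous_of_measurable hc hm).comp
    ((measurable_firstHitTime hm hc hF).prodMk measurable_id)

variable {P : Measure Ω} {Y : ℝ → Ω → E}

lemma exists_continuous_modification [TopologicalSpace E] [MeasurableSpace E]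
    (hm : ∀ t, Measurable (Y t)) (hc : ∀ᵐ ω ∂P, ContinuousOn (fun t => Y t ω) (Ici 0)) :
    ∃ Z : ℝ → Ω → E, (∀ t, Measurable (Z t)) ∧ (∀ ω, Continuous fun t => Z t ω) ∧
      ∀ᵐ ω ∂P, EqOn (fun t => Z t ω) (fun t => Y t ω) (Ici 0) := by
  classical
  obtain ⟨s, hs_ae, hs_meas, hs⟩ := hc.exists_measurable_mem
  refine ⟨fun t => s.piecewise (Y (max t 0)) (Y 0), fun t => (hm _).piecewise hs_meas (hm 0),
    fun ω => ?_, ?_⟩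
  · by_cases hω : ω ∈ s
    · simpa [hω, Function.comp_def] using
      (hs ω hω).comp_continuous (by fun_prop) fun t => le_max_right t 0
    · simpa [hω] using continuous_const
  · filter_upwards [hs_ae] with ω hω t ht
    simp [hω, max_eq_left (mem_Ici.1 ht)]

variable [PseudoEMetricSpace E] [MeasurableSpace E]

lemma aemeasurable_firstHitTime [OpensMeasurableSpace E] (hm : ∀ t, Measurable (Y t))
    (hc : ∀ᵐ ω ∂P, ContinuousOn (fun t => Y t ω) (Ici 0)) {F : Set E} (hF : IsClosed F) :
    AEMeasurable (fun ω => firstHitTime (fun t => Y t ω) F) P := by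
  obtain ⟨Z, hZm, hZc, hZY⟩ := exists_continuous_modification hm hc
  refine (measurable_firstHitTime hZm hZc hF).aemeasurable.congr ?_
  filter_upwards [hZY] with ω hω
  simp only [firstHitTime, hitTimes_congr hω]

lemma nullMeasurableSet_apply_firstHitTime_mem [BorelSpace E] (hm : ∀ t, Measurable (Y t))
    (hc : ∀ᵐ ω ∂P, ContinuousOn (fun t => Y t ω) (Ici 0)) {F : Set E} (hF : IsClosed F)
    {S : Set E} (hS : MeasurableSet S) :
    NullMeasurableSet {ω | (hitTimes (fun t => Y t ω) F).Nonempty ∧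
      Y (firstHitTime (fun t => Y t ω) F) ω ∈ S} P := by
  obtain ⟨Z, hZm, hZc, hZY⟩ := exists_continuous_modification hm hc
  refine NullMeasurableSet.congr (((measurableSet_hitTimes_nonempty hZm hZc hF).inter
    (measurable_apply_firstHitTime hZm hZc hF hS)).nullMeasurableSet) ?_
  refine eventuallyEq_set.2 ?_
  filter_upwards [hZY] with ω hω
  have hfirst : firstHitTime (fun t => Z t ω) F = firstHitTime (fun t => Y t ω) F := by
    simp only [firstHitTime, hitTimes_congr hω]
  simp only [mem_inter_iff, mem_ofPred_eq, mem_preimage, hitTimes_congr hω, hfirst,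
    hω (firstHitTime_nonneg _ _)]

end Measurability

section ScaledPaths

/-- The path `t ↦ ε e^{λt} w(t)`. Along the time-changed Brownian path
`w(t) = B((1 - e^{-2λt}) / (2λ))` it is `X_ε`. -/
noncomputable def scaledPath (lam : ℝ) (w : ℝ → ℝ) (ε t : ℝ) : ℝ :=
  ε * Real.exp (lam * t) * w t

variable {lam a b z : ℝ} {w : ℝ → ℝ}

lemma continuousOn_scaledPath (lam : ℝ) {s : Set ℝ} (hw : ContinuousOn w s) (ε : ℝ) :
    ContinuousOn (scaledPath lam w ε) s :=
  (by fun_prop : Continuous fun t => ε * Real.exp (lam * t)).continuousOn.mul hw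

lemma tendsto_abs_scaledPath_atTop (hlam : 0 < lam) (hz : Tendsto w atTop (𝓝 z)) (hz0 : z ≠ 0)
    {ε : ℝ} (hε : 0 < ε) : Tendsto (fun t => |scaledPath lam w ε t|) atTop atTop := by
  have hexp : Tendsto (fun t => ε * Real.exp (lam * t)) atTop atTop :=
    (Real.tendsto_exp_atTop.comp (tendsto_id.const_mul_atTop hlam)).const_mul_atTop hε
  simpa only [scaledPath, abs_mul, Function.comp_def] using
    (tendsto_abs_atTop_atTop.comp hexp).atTop_mul_pos (abs_pos.2 hz0) hz.abs

lemma tendstoUniformlyOn_scaledPath (lam : ℝ) {K : Set ℝ} (hK : IsCompact K)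
    (hw : ContinuousOn w K) :
    TendstoUniformlyOn (scaledPath lam w) (fun _ => 0) (𝓝 0) K := by
  obtain ⟨M, hM⟩ := hK.exists_bound_of_continuousOn (continuousOn_scaledPath lam hw 1)
  have hlim : Tendsto (fun ε : ℝ => |ε| * M) (𝓝 0) (𝓝 0) := by
    simpa using (tendsto_id.abs.mul_const M : Tendsto (fun ε : ℝ => |ε| * M) (𝓝 0) _)
  refine Metric.tendstoUniformlyOn_iff.2 fun δ hδ => ?_
  filter_upwards [hlim.eventually_lt_const hδ] with ε hε t ht
  have hscale : scaledPath lam w ε t = ε * scaledPath lam w 1 t := by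
    simp only [scaledPath]
    ring
  rw [dist_zero_left, hscale, norm_mul, Real.norm_eq_abs ε]
  exact (mul_le_mul_of_nonneg_left (hM t ht) (abs_nonneg ε)).trans_lt hε

lemma eventually_hitTimes_scaledPath_nonempty (hlam : 0 < lam) (ha : a < 0) (hb : 0 < b)
    (hw : ContinuousOn w (Ici 0)) (hz : Tendsto w atTop (𝓝 z)) (hz0 : z ≠ 0) :
    ∀ᶠ ε in 𝓝[>] 0, (hitTimes (scaledPath lam w ε) {a, b}).Nonempty := by
  have hstart : Tendsto (fun ε => scaledPath lam w ε 0) (𝓝[>] 0) (𝓝 0) :=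
    tendsto_nhdsWithin_of_tendsto_nhds
      ((tendstoUniformlyOn_scaledPath lam isCompact_singleton
        (continuousOn_singleton w 0)).tendsto_at (mem_singleton 0))
  filter_upwards [hstart (Icc_mem_nhds ha hb), self_mem_nhdsWithin] with ε h0 hε
  exact hitTimes_pair_nonempty (continuousOn_scaledPath lam hw ε) h0
    (tendsto_abs_scaledPath_atTop hlam hz hz0 hε)

lemma tendsto_firstHitTime_scaledPath_atTop (hlam : 0 < lam) (ha : a < 0) (hb : 0 < b)
    (hw : ContinuousOn w (Ici 0)) (hz : Tendsto w atTop (𝓝 z)) (hz0 : z ≠ 0) :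
    Tendsto (fun ε => firstHitTime (scaledPath lam w ε) {a, b}) (𝓝[>] 0) atTop := by
  refine tendsto_firstHitTime_atTop (x := 0) ?_ (fun T => ?_)
    (eventually_hitTimes_scaledPath_nonempty hlam ha hb hw hz hz0)
  · exact (toFinite _).isClosed.compl_mem_nhds (by simp [ha.ne', hb.ne])
  · exact fun V hV => nhdsWithin_le_nhds <|
      tendstoUniformlyOn_scaledPath lam isCompact_Icc (hw.mono Icc_subset_Ici_self) V hV

lemma eventually_exit_right_iff (hlam : 0 < lam) (ha : a < 0) (hb : 0 < b)
    (hw : ContinuousOn w (Ici 0)) (hz : Tendsto w atTop (𝓝 z)) (hz0 : z ≠ 0) :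
    ∀ᶠ ε in 𝓝[>] 0, ((hitTimes (scaledPath lam w ε) {a, b}).Nonempty ∧
      scaledPath lam w ε (firstHitTime (scaledPath lam w ε) {a, b}) = b) ↔ 0 < z := by
  have hwτ := hz.comp (tendsto_firstHitTime_scaledPath_atTop hlam ha hb hw hz hz0)
  have hsign : ∀ᶠ ε in 𝓝[>] 0,
      (0 < w (firstHitTime (scaledPath lam w ε) {a, b}) ↔ 0 < z) := by
    rcases hz0.lt_or_gt with hneg | hpos
    · filter_upwards [hwτ.eventually_lt_const hneg] with ε hε
      exact iff_of_false hε.not_gt hneg.not_gt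
    · filter_upwards [hwτ.eventually_const_lt hpos] with ε hε
      exact iff_of_true hε hpos
  filter_upwards [hsign, eventually_hitTimes_scaledPath_nonempty hlam ha hb hw hz hz0,
    self_mem_nhdsWithin] with ε hsign hne hε
  have hscale : 0 < ε * Real.exp (lam * firstHitTime (scaledPath lam w ε) {a, b}) :=
    mul_pos hε (Real.exp_pos _)
  rw [← hsign, ← mul_pos_iff_of_pos_left hscale]
  obtain ⟨-, hτa | hτb⟩ :=
    firstHitTime_mem_hitTimes (continuousOn_scaledPath lam hw ε) (toFinite _).isClosed hne
  · exact iff_of_false (fun h => (ha.trans hb).ne (hτa.symm.trans h.2))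
      (hτa.trans_lt ha).not_gt
  · exact iff_of_true ⟨hne, hτb⟩ (hb.trans_eq hτb.symm)

lemma sub_log_inv_eq_of_scaledPath_eq (hlam : lam ≠ 0) {ε t : ℝ} (hε : 0 < ε) (hwt : 0 < w t)
    (h : scaledPath lam w ε t = b) :
    t - (1 / lam) * Real.log (1 / ε) = (1 / lam) * (Real.log b - Real.log (w t)) := by
  have hlog : Real.log b = Real.log ε + lam * t + Real.log (w t) := by
    rw [← h, scaledPath, Real.log_mul (by positivity) hwt.ne', Real.log_mul hε.ne' (by positivity),
      Real.log_exp]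
  rw [hlog, one_div ε, Real.log_inv]
  field_simp
  ring

lemma tendsto_firstHitTime_scaledPath_sub_log (hlam : 0 < lam) (ha : a < 0) (hb : 0 < b)
    (hw : ContinuousOn w (Ici 0)) (hz : Tendsto w atTop (𝓝 z)) (hz0 : 0 < z) :
    Tendsto (fun ε => firstHitTime (scaledPath lam w ε) {a, b} - (1 / lam) * Real.log (1 / ε))
      (𝓝[>] 0) (𝓝 ((1 / lam) * (Real.log b - Real.log z))) := by
  have hwτ := hz.comp (tendsto_firstHitTime_scaledPath_atTop hlam ha hb hw hz hz0.ne')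
  refine Tendsto.congr' ?_ (((hwτ.log hz0.ne').const_sub (Real.log b)).const_mul (1 / lam))
  filter_upwards [eventually_exit_right_iff hlam ha hb hw hz hz0.ne',
    hwτ.eventually_const_lt hz0, self_mem_nhdsWithin] with ε hexit hpos hε
  exact (sub_log_inv_eq_of_scaledPath_eq (w := w) hlam.ne' hε hpos (hexit.2 hz0).2).symm

end ScaledPaths

section Conditioning

variable {Ω ι E : Type*} [MeasurableSpace Ω] {P : Measure Ω} [IsFiniteMeasure P]
  {l : Filter ι} [l.IsCountablyGenerated] {C : ι → Set Ω} {A : Set Ω}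
  [TopologicalSpace E] [MeasurableSpace E] [OpensMeasurableSpace E] {g : ι → Ω → E} {G : Ω → E}

lemma tendsto_setIntegral_of_eventually_mem_iff (hC : ∀ i, NullMeasurableSet (C i) P)
    (hA : NullMeasurableSet A P) (hg : ∀ i, AEMeasurable (g i) P)
    (hCA : ∀ᵐ ω ∂P, ∀ᶠ i in l, ω ∈ C i ↔ ω ∈ A)
    (hgG : ∀ᵐ ω ∂P, ω ∈ A → Tendsto (fun i => g i ω) l (𝓝 (G ω)))
    (f : BoundedContinuousFunction E ℝ) :
    Tendsto (fun i => ∫ ω in C i, f (g i ω) ∂P) l (𝓝 (∫ ω in A, f (G ω) ∂P)) := by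
  simp_rw [← integral_indicator₀ (hC _), ← integral_indicator₀ hA]
  refine tendsto_integral_filter_of_dominated_convergence (fun _ => ‖f‖)
    (.of_forall fun i => ?_) (.of_forall fun i => .of_forall fun ω => ?_)
    (integrable_const _) ?_
  · exact ((f.continuous.measurable.comp_aemeasurable (hg i)).indicator₀
      (hC i)).aestronglyMeasurable
  · exact (norm_indicator_le_norm_self _ _).trans (f.norm_coe_le_norm _)
  · filter_upwards [hCA, hgG] with ω hCA hgG
    have hind : ∀ᶠ i in l, A.indicator (fun ω => f (g i ω)) ω
        = (C i).indicator (fun ω => f (g i ω)) ω := by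
      filter_upwards [hCA] with i hi
      by_cases hω : ω ∈ A <;> simp [hi, hω]
    refine Tendsto.congr' hind ?_
    by_cases hω : ω ∈ A
    · simpa only [indicator_of_mem hω, Function.comp_def] using
        (f.continuous.tendsto (G ω)).comp (hgG hω)
    · simpa only [indicator_of_notMem hω] using tendsto_const_nhds

lemma tendsto_integral_cond_of_eventually_mem_iff (hC : ∀ i, NullMeasurableSet (C i) P)
    (hA : NullMeasurableSet A P) (hA0 : P A ≠ 0) (hg : ∀ i, AEMeasurable (g i) P)
    (hCA : ∀ᵐ ω ∂P, ∀ᶠ i in l, ω ∈ C i ↔ ω ∈ A)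
    (hgG : ∀ᵐ ω ∂P, ω ∈ A → Tendsto (fun i => g i ω) l (𝓝 (G ω)))
    (f : BoundedContinuousFunction E ℝ) :
    Tendsto (fun i => ∫ ω, f (g i ω) ∂P[|C i]) l (𝓝 (∫ ω, f (G ω) ∂P[|A])) := by
  have hP : Tendsto (fun i => P.real (C i)) l (𝓝 (P.real A)) := by
    simpa using tendsto_setIntegral_of_eventually_mem_iff hC hA hg hCA hgG
      (BoundedContinuousFunction.const E 1)
  have hA0' : P.real A ≠ 0 := (measureReal_ne_zero_iff).2 hA0
  simpa only [ProbabilityTheory.cond, integral_smul_measure, ENNReal.toReal_inv, smul_eq_mul,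
    measureReal_def] using (hP.inv₀ hA0').mul
      (tendsto_setIntegral_of_eventually_mem_iff hC hA hg hCA hgG f)

end Conditioning

section Symmetry

variable {μ : Measure ℝ} [μ.IsNegInvariant]

lemma measure_eq_two_mul_measure_Ioi_inter (h0 : μ {0} = 0) {s : Set ℝ} (hs : -s = s) :
    μ s = 2 * μ (Ioi 0 ∩ s) := by
  have hneg : (s \ Ioi 0 : Set ℝ) =ᵐ[μ] (-(Ioi 0 ∩ s) : Set ℝ) := by
    refine eventuallyEq_set.2 ?_
    filter_upwards [compl_mem_ae_iff.2 h0] with x hx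
    have hmem : -x ∈ s ↔ x ∈ s := by rw [← Set.mem_neg, hs]
    have hlt : x ≤ 0 ↔ x < 0 := Ne.le_iff_lt hx
    simp [hmem, hlt, and_comm]
  rw [← measure_inter_add_sdiff s (measurableSet_Ioi (a := (0 : ℝ))), measure_congr hneg,
    Measure.measure_neg, inter_comm s, two_mul]

lemma measure_Ioi_zero [IsProbabilityMeasure μ] (h0 : μ {0} = 0) : μ (Ioi 0) = 2⁻¹ := by
  have h := measure_eq_two_mul_measure_Ioi_inter h0 (s := univ) (by simp)
  rw [measure_univ, inter_univ] at h
  exact ENNReal.eq_inv_of_mul_eq_one_left (by rw [mul_comm, h])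

lemma map_abs_cond_Ioi [IsProbabilityMeasure μ] (h0 : μ {0} = 0) :
    (μ[|Ioi 0]).map abs = μ.map abs := by
  ext s hs
  have hsymm : -(abs ⁻¹' s : Set ℝ) = abs ⁻¹' s := by
    ext x
    simp
  rw [Measure.map_apply measurable_abs hs, Measure.map_apply measurable_abs hs,
    cond_apply measurableSet_Ioi, measure_Ioi_zero h0, inv_inv,
    measure_eq_two_mul_measure_Ioi_inter h0 hsymm]

lemma identDistrib_abs_cond_pos {Ω : Type*} [MeasurableSpace Ω] {P : Measure Ω}
    [IsProbabilityMeasure P] {Z : Ω → ℝ} (hZ : Measurable Z) [(P.map Z).IsNegInvariant]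
    (h0 : P.map Z {0} = 0) :
    IdentDistrib (fun ω => |Z ω|) (fun ω => |Z ω|) (P[|{ω | 0 < Z ω}]) P where
  aemeasurable_fst := hZ.abs.aemeasurable
  aemeasurable_snd := hZ.abs.aemeasurable
  map_eq := by
    have := Measure.isProbabilityMeasure_map (μ := P) hZ.aemeasurable
    have hmap : (P[|{ω | 0 < Z ω}]).map Z = (P.map Z)[|Ioi 0] := by
      rw [ProbabilityTheory.cond, ProbabilityTheory.cond, Measure.map_smul,
        Measure.restrict_map hZ measurableSet_Ioi, Measure.map_apply hZ measurableSet_Ioi]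
      rfl
    rw [← Function.comp_def abs Z, ← Measure.map_map measurable_abs hZ, hmap, map_abs_cond_Ioi h0,
      Measure.map_map measurable_abs hZ]

end Symmetry

section Gaussian

variable {Ω Ω' : Type*} [MeasurableSpace Ω] [MeasurableSpace Ω'] {P : Measure Ω} {P' : Measure Ω'}
  {Z : Ω → ℝ} {N : Ω' → ℝ} {lam : ℝ}

lemma isNegInvariant_gaussianReal (v : NNReal) : (gaussianReal 0 v).IsNegInvariant :=
  ⟨gaussianReal_map_neg.trans (by rw [neg_zero])⟩

lemma identDistrib_gaussian_sqrt_mul {v : NNReal} (hZ : HasLaw Z (gaussianReal 0 v) P)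
    (hN : HasLaw N (gaussianReal 0 1) P') :
    IdentDistrib Z (fun ω => √v * N ω) P P' := by
  have hsq : (NNReal.mk (√v ^ 2) (sq_nonneg _)) = v := NNReal.eq (Real.sq_sqrt v.2)
  have hlaw := gaussianReal_const_mul hN √v
  rw [mul_zero, mul_one, hsq] at hlaw
  exact hZ.identDistrib hlaw

lemma measure_singleton_gaussianReal {m : ℝ} {v : NNReal} (hv : v ≠ 0) (x : ℝ) :
    gaussianReal m v {x} = 0 :=
  have := nullSingletonClass_gaussianReal (μ := m) hv
  measure_singleton x

lemma ae_ne_zero_of_gaussian {m : ℝ} {v : NNReal} (hv : v ≠ 0)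
    (hZ : HasLaw Z (gaussianReal m v) P) : ∀ᵐ ω ∂P, Z ω ≠ 0 := by
  refine ae_of_ae_map hZ.aemeasurable (p := (· ≠ 0)) ?_
  rw [hZ.map_eq]
  exact compl_mem_ae_iff.2 (measure_singleton_gaussianReal hv 0)

lemma measure_pos_ne_zero_of_gaussian {v : NNReal} (hv : v ≠ 0)
    (hZ : HasLaw Z (gaussianReal 0 v) P) : P {ω | 0 < Z ω} ≠ 0 := by
  have := isNegInvariant_gaussianReal v
  rw [hZ.measure_eq measurableSet_Ioi]
  change gaussianReal 0 v (Ioi 0) ≠ 0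
  simp [measure_Ioi_zero (measure_singleton_gaussianReal hv 0)]

lemma one_div_mul_log_sub_log_abs_sqrt_mul (hlam : 0 < lam) (b : ℝ) {x : ℝ} (hx : x ≠ 0) :
    (1 / lam) * (Real.log b - Real.log |√(1 / (2 * lam)) * x|)
      = (1 / lam) * Real.log b + (1 / (2 * lam)) * Real.log (2 * lam)
        + (1 / lam) * (-Real.log |x|) := by
  rw [Real.log_abs, Real.log_mul (by positivity) hx, Real.log_sqrt (by positivity), Real.log_abs,
    one_div (2 * lam), Real.log_inv]
  field_simp
  ring

lemma integral_log_cond_pos_gaussian [IsProbabilityMeasure P] (hlam : 0 < lam) (hZm : Measurable Z)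
    (hZ : HasLaw Z (gaussianReal 0 (1 / (2 * lam)).toNNReal) P)
    (hN : HasLaw N (gaussianReal 0 1) P') (b : ℝ) {f : ℝ → ℝ} (hf : Measurable f) :
    ∫ ω, f ((1 / lam) * (Real.log b - Real.log (Z ω))) ∂P[|{ω | 0 < Z ω}]
      = ∫ ω', f ((1 / lam) * Real.log b + (1 / (2 * lam)) * Real.log (2 * lam)
          + (1 / lam) * (-Real.log |N ω'|)) ∂P' := by
  have hvar : 0 ≤ 1 / (2 * lam) := by positivity
  have hv : (1 / (2 * lam)).toNNReal ≠ 0 := (Real.toNNReal_pos.2 (by positivity)).ne'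
  have : (P.map Z).IsNegInvariant := hZ.map_eq ▸ isNegInvariant_gaussianReal _
  have hid : IdentDistrib (fun ω => |Z ω|) (fun ω' => |√(1 / (2 * lam)) * N ω'|)
      (P[|{ω | 0 < Z ω}]) P' := by
    refine (identDistrib_abs_cond_pos hZm ?_).trans ?_
    · rw [hZ.map_eq, measure_singleton_gaussianReal hv]
    · simpa only [Real.coe_toNNReal _ hvar, Function.comp_def] using
        (identDistrib_gaussian_sqrt_mul hZ hN).comp measurable_abs
  have hφ : Measurable fun x => f ((1 / lam) * (Real.log b - Real.log x)) :=
    hf.comp (by fun_prop)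
  calc ∫ ω, f ((1 / lam) * (Real.log b - Real.log (Z ω))) ∂P[|{ω | 0 < Z ω}]
      = ∫ ω, f ((1 / lam) * (Real.log b - Real.log |Z ω|)) ∂P[|{ω | 0 < Z ω}] := by
        simp only [Real.log_abs]
    _ = ∫ ω', f ((1 / lam) * (Real.log b - Real.log |√(1 / (2 * lam)) * N ω'|)) ∂P' :=
        (hid.comp hφ).integral_eq
    _ = _ := by
        refine integral_congr_ae ?_
        filter_upwards [ae_ne_zero_of_gaussian one_ne_zero hN] with ω' hω'
        rw [one_div_mul_log_sub_log_abs_sqrt_mul hlam b hω']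

end Gaussian

section Brownian

/-- The clock `(1 - e^{-2λt}) / (2λ)` of the time-changed Brownian motion, which is the variance of
`∫₀ᵗ e^{-λs} dW(s)`. -/
noncomputable def clock (lam t : ℝ) : ℝ := (1 - Real.exp (-(2 * lam * t))) / (2 * lam)

lemma continuous_clock (lam : ℝ) : Continuous (clock lam) := by
  unfold clock
  fun_prop

lemma clock_nonneg {lam t : ℝ} (hlam : 0 < lam) (ht : 0 ≤ t) : 0 ≤ clock lam t := by
  have hexp : Real.exp (-(2 * lam * t)) ≤ 1 := Real.exp_le_one_iff.2 (by nlinarith)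
  exact div_nonneg (sub_nonneg.2 hexp) (by positivity)

lemma tendsto_clock {lam : ℝ} (hlam : 0 < lam) :
    Tendsto (clock lam) atTop (𝓝 (1 / (2 * lam))) := by
  have hexp : Tendsto (fun t => Real.exp (-(2 * lam * t))) atTop (𝓝 0) :=
    Real.tendsto_exp_neg_atTop_nhds_zero.comp (tendsto_id.const_mul_atTop (by positivity))
  unfold clock
  simpa using (hexp.const_sub 1).div_const (2 * lam)

variable {Ω : Type*} [MeasurableSpace Ω] {P : Measure Ω} {B : ℝ → Ω → ℝ} {lam : ℝ}

lemma IsBrownianMotion.hasLaw (hB : IsBrownianMotion P B) {t : ℝ} (ht : 0 ≤ t) :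
    HasLaw (B t) (gaussianReal 0 t.toNNReal) P where
  aemeasurable := (hB.1 t).aemeasurable
  map_eq := by
    have hincr := hB.2.2.1 0 t le_rfl ht
    rw [sub_zero] at hincr
    rw [← hincr]
    refine Measure.map_congr ?_
    filter_upwards [hB.2.1] with ω hω
    rw [hω.1, sub_zero]

lemma IsBrownianMotion.ae_ne_zero (hB : IsBrownianMotion P B) {t : ℝ} (ht : 0 < t) :
    ∀ᵐ ω ∂P, B t ω ≠ 0 :=
  ae_ne_zero_of_gaussian (Real.toNNReal_pos.2 ht).ne' (hB.hasLaw ht.le)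

lemma IsBrownianMotion.measure_pos_ne_zero (hB : IsBrownianMotion P B) {t : ℝ} (ht : 0 < t) :
    P {ω | 0 < B t ω} ≠ 0 :=
  measure_pos_ne_zero_of_gaussian (Real.toNNReal_pos.2 ht).ne' (hB.hasLaw ht.le)

lemma IsBrownianMotion.ae_comp_clock (hB : IsBrownianMotion P B) (hlam : 0 < lam) :
    ∀ᵐ ω ∂P, ContinuousOn (fun t => B (clock lam t) ω) (Ici 0) ∧
      Tendsto (fun t => B (clock lam t) ω) atTop (𝓝 (B (1 / (2 * lam)) ω)) := by
  filter_upwards [hB.2.1] with ω ⟨_, hω⟩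
  have hpos : 0 < 1 / (2 * lam) := by positivity
  exact ⟨hω.comp (continuous_clock lam).continuousOn fun t ht => clock_nonneg hlam ht,
    (hω.continuousAt (Ici_mem_nhds hpos)).tendsto.comp (tendsto_clock hlam)⟩

lemma IsBrownianMotion.integral_log_cond_pos [IsProbabilityMeasure P] {Ω' : Type*}
    [MeasurableSpace Ω'] {P' : Measure Ω'} {N : Ω' → ℝ} (hB : IsBrownianMotion P B)
    (hlam : 0 < lam) (hN : P'.map N = gaussianReal 0 1) (b : ℝ) {f : ℝ → ℝ} (hf : Measurable f) :
    ∫ ω, f ((1 / lam) * (Real.log b - Real.log (B (1 / (2 * lam)) ω)))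
        ∂P[|{ω | 0 < B (1 / (2 * lam)) ω}]
      = ∫ ω', f ((1 / lam) * Real.log b + (1 / (2 * lam)) * Real.log (2 * lam)
          + (1 / lam) * (-Real.log |N ω'|)) ∂P' :=
  integral_log_cond_pos_gaussian hlam (hB.1 _) (hB.hasLaw (by positivity))
    ⟨AEMeasurable.of_map_ne_zero (hN ▸ IsProbabilityMeasure.ne_zero _), hN⟩ b hf

end Brownian

theorem exit_time_limit_starting_at_zero_general
    {Ω : Type*} [MeasurableSpace Ω] (P : Measure Ω) [IsFiniteMeasure P]
    (W : ℝ → Ω → ℝ) (hWm : ∀ t, Measurable (W t)) (Z : Ω → ℝ)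
    (hW : ∀ᵐ ω ∂P, ContinuousOn (fun t => W t ω) (Ici 0) ∧
      Tendsto (fun t => W t ω) atTop (𝓝 (Z ω)))
    (hZ : ∀ᵐ ω ∂P, Z ω ≠ 0) (hZpos : P {ω | 0 < Z ω} ≠ 0)
    (lam qm qp : ℝ) (hlam : 0 < lam) (hqm : qm < 0) (hqp : 0 < qp)
    (X : ℝ → ℝ → Ω → ℝ) (hX : ∀ ε t ω, X ε t ω = ε * Real.exp (lam * t) * W t ω)
    (τ : ℝ → Ω → ℝ)
    (hτ : ∀ ε ω, τ ε ω = sInf {t | 0 ≤ t ∧ (X ε t ω = qm ∨ X ε t ω = qp)})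
    (C : ℝ → Set Ω)
    (hC : ∀ ε, C ε
      = {ω | {t | 0 ≤ t ∧ (X ε t ω = qm ∨ X ε t ω = qp)}.Nonempty ∧ X ε (τ ε ω) ω = qp}) :
    ∀ f : BoundedContinuousFunction ℝ ℝ,
      Tendsto (fun ε : ℝ => ∫ ω, f (τ ε ω - (1 / lam) * Real.log (1 / ε)) ∂(P[|C ε]))
        (𝓝[>] 0)
        (𝓝 (∫ ω, f ((1 / lam) * (Real.log qp - Real.log (Z ω))) ∂(P[|{ω | 0 < Z ω}]))) := by
  obtain rfl : X = fun ε t ω => scaledPath lam (W · ω) ε t := by ext; exact hX _ _ _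
  obtain rfl : τ = fun ε ω => firstHitTime (scaledPath lam (W · ω) ε) {qm, qp} := by
    ext; exact hτ _ _
  have hXm (ε t : ℝ) : Measurable fun ω => scaledPath lam (W · ω) ε t := (hWm t).const_mul _
  have hXc (ε : ℝ) : ∀ᵐ ω ∂P, ContinuousOn (scaledPath lam (W · ω) ε) (Ici 0) :=
    hW.mono fun ω hω => continuousOn_scaledPath lam hω.1 ε
  have hpair : IsClosed ({qm, qp} : Set ℝ) := (toFinite _).isClosed
  have hZm : AEMeasurable Z P :=
    aemeasurable_of_tendsto_metrizable_ae atTop (fun t => (hWm t).aemeasurable)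
      (hW.mono fun ω hω => hω.2)
  refine tendsto_integral_cond_of_eventually_mem_iff (fun ε => ?_)
    (nullMeasurableSet_lt aemeasurable_const hZm) hZpos
    (fun ε => (aemeasurable_firstHitTime (hXm ε) (hXc ε) hpair).sub_const _) ?_ ?_
  · rw [hC]
    exact nullMeasurableSet_apply_firstHitTime_mem (hXm ε) (hXc ε) hpair
      (measurableSet_singleton qp)
  · filter_upwards [hW, hZ] with ω ⟨hcont, hlim⟩ hω
    simp only [hC]
    exact eventually_exit_right_iff hlam hqm hqp hcont hlim hω
  · filter_upwards [hW] with ω ⟨hcont, hlim⟩ hω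
    exact tendsto_firstHitTime_scaledPath_sub_log hlam hqm hqp hcont hlim hω

/-- Theorem 4 (Day; exit starting at the saddle point `0`):
for `λ > 0`, `q₋ < 0 < q₊`, the law of `τ_ε - (1/λ) ln(1/ε)` conditioned on exit at `q₊`
converges weakly, as `ε → 0⁺`, to the law of
`(1/λ) ln q₊ + (1/(2λ)) ln(2λ) + (1/λ) Θ`, where `Θ = -ln |N|` and `N` is standard Gaussian. -/
theorem exit_time_limit_starting_at_zero
    {Ω : Type*} [MeasurableSpace Ω] (P : Measure Ω) [IsProbabilityMeasure P]
    (hPc : P.IsComplete)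
    (B : ℝ → Ω → ℝ) (hB : IsBrownianMotion P B)
    (lam qm qp : ℝ) (hlam : 0 < lam) (hqm : qm < 0) (hqp : 0 < qp)
    (X : ℝ → ℝ → Ω → ℝ)
    (hX : ∀ ε t ω, X ε t ω
      = ε * Real.exp (lam * t) * B ((1 - Real.exp (-(2 * lam * t))) / (2 * lam)) ω)
    (τ : ℝ → Ω → ℝ)
    (hτ : ∀ ε ω, τ ε ω = sInf {t | 0 ≤ t ∧ (X ε t ω = qm ∨ X ε t ω = qp)})
    (C : ℝ → Set Ω)
    (hC : ∀ ε, C ε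
      = {ω | {t | 0 ≤ t ∧ (X ε t ω = qm ∨ X ε t ω = qp)}.Nonempty ∧ X ε (τ ε ω) ω = qp})
    -- `N` is a standard Gaussian random variable on an auxiliary probability space
    {Ω' : Type*} [MeasurableSpace Ω'] (P' : Measure Ω') [IsProbabilityMeasure P']
    (N : Ω' → ℝ) (hN : Measure.map N P' = gaussianReal 0 1) :
    ∀ f : BoundedContinuousFunction ℝ ℝ,
      Tendsto
        (fun ε : ℝ => ∫ ω, f (τ ε ω - (1 / lam) * Real.log (1 / ε)) ∂(P[|C ε]))
        (𝓝[>] 0)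
        (𝓝 (∫ ω', f ((1 / lam) * Real.log qp + (1 / (2 * lam)) * Real.log (2 * lam)
            + (1 / lam) * (-Real.log |N ω'|)) ∂P')) := by
  intro f
  have hvar : 0 < 1 / (2 * lam) := by positivity
  rw [← hB.integral_log_cond_pos hlam hN qp f.continuous.measurable]
  exact exit_time_limit_starting_at_zero_general P (fun t => B (clock lam t)) (fun t => hB.1 _) _
    (hB.ae_comp_clock hlam) (hB.ae_ne_zero hvar) (hB.measure_pos_ne_zero hvar)
    lam qm qp hlam hqm hqp X hX τ hτ C hC f
end

section
/- Let λ > 0 and q₋ < x₀ < 0 < q₊. The families (E_ε)_{ε>0} and (F_ε)_{ε>0} are asymptotically equivalent as ε → 0⁺, where E_ε = {there exists t ≥ 0 with X_ε(t) = q₊} and F_ε = {x₀ + ε·B(1/(2λ)) > 0}. -/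
open MeasureTheory ProbabilityTheory Filter Topology Set

/-- Families of events `(A_ε)` and `(B_ε)` are asymptotically equivalent as `ε → 0⁺` if
`P(A_ε) > 0` for all sufficiently small `ε > 0` and `P(A_ε Δ B_ε)/P(A_ε) → 0` as `ε → 0⁺`. -/
def AsympEquivalent {Ω : Type*} [MeasurableSpace Ω] (P : Measure Ω)
    (A B : ℝ → Set Ω) : Prop :=
  (∀ᶠ ε in 𝓝[>] (0 : ℝ), 0 < P (A ε)) ∧
  Tendsto (fun ε : ℝ => (P (symmDiff (A ε) (B ε))).toReal / (P (A ε)).toReal)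
    (𝓝[>] 0) (𝓝 0)


/-!
On `F_ε` the factor `e^{λt}` drives `X_ε` to `+∞`, so almost every path of `F_ε` crosses `q₊`.
Conversely, a path reaching `q₊` exceeds the lower level `r = q₊ / 2` at some time; call this event
`G_ε`, so that `F_ε ⊆ E_ε ⊆ G_ε` almost surely. If `X_ε` exceeds `r` for the first time at `t`, then
ending outside `F_ε` forces the remaining increment `B(1/(2λ)) - B((1 - e^{-2λt})/(2λ))`, which is
independent of the past and has variance `e^{-2λt}/(2λ)`, to be at most `-(r/ε) e^{-λt}`. By
Chebyshev's inequality this has probability at most `ε² / (2λr²)`, uniformly in `t`. Hence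
`P(G_ε \ F_ε) = O(ε²) P(G_ε)`, which bounds the symmetric difference and also yields
`P(G_ε) ≤ 2 P(F_ε)`.
-/

open scoped NNReal ENNReal

section Sandwich

variable {Ω : Type*} [MeasurableSpace Ω] {P : Measure Ω} [IsFiniteMeasure P]

theorem measure_le_two_mul_of_measure_diff_le {F G : Set Ω} {p : ℝ≥0∞}
    (hGF : P (G \ F) ≤ p * P G) (hp : p ≤ 2⁻¹) : P G ≤ 2 * P F := by
  have hG : P G / 2 + P G / 2 ≤ P G / 2 + P F :=
    calc P G / 2 + P G / 2
        = P G := ENNReal.add_halves _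
      _ ≤ P ((G \ F) ∪ F) := measure_mono (by simp)
      _ ≤ P (G \ F) + P F := measure_union_le _ _
      _ ≤ P G / 2 + P F := by
          rw [div_eq_mul_inv, mul_comm (P G)]
          gcongr
          exact hGF.trans (by gcongr)
  rw [ENNReal.add_le_add_iff_left (ENNReal.div_ne_top (measure_ne_top P G) two_ne_zero)] at hG
  rw [mul_comm]
  exact (ENNReal.div_le_iff two_ne_zero ENNReal.ofNat_ne_top).1 hG

theorem measure_symmDiff_le_of_ae_sandwich {E F G : Set Ω} {p : ℝ≥0∞} (hFE : F ≤ᵐ[P] E)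
    (hEG : E ≤ᵐ[P] G) (hGF : P (G \ F) ≤ p * P G) (hp : p ≤ 2⁻¹) :
    P (symmDiff E F) ≤ 2 * p * P E := by
  have hsub : symmDiff E F ≤ᵐ[P] (G \ F : Set Ω) := by
    filter_upwards [hFE, hEG] with ω hωFE hωEG hω
    exact hω.elim (fun h ↦ ⟨hωEG h.1, h.2⟩) fun h ↦ absurd (hωFE h.1) h.2
  calc P (symmDiff E F)
      ≤ P (G \ F) := measure_mono_ae hsub
    _ ≤ p * P G := hGF
    _ ≤ p * (2 * P F) := by gcongr; exact measure_le_two_mul_of_measure_diff_le hGF hp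
    _ ≤ p * (2 * P E) := by gcongr p * (2 * ?_); exact measure_mono_ae hFE
    _ = 2 * p * P E := by ring

theorem AsympEquivalent.of_ae_sandwich {E F G : ℝ → Set Ω} {p : ℝ → ℝ≥0∞}
    (hp : Tendsto p (𝓝[>] 0) (𝓝 0)) (hF : ∀ᶠ ε in 𝓝[>] 0, 0 < P (F ε))
    (hFE : ∀ᶠ ε in 𝓝[>] 0, F ε ≤ᵐ[P] E ε) (hEG : ∀ᶠ ε in 𝓝[>] 0, E ε ≤ᵐ[P] G ε)
    (hGF : ∀ᶠ ε in 𝓝[>] 0, P (G ε \ F ε) ≤ p ε * P (G ε)) :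
    AsympEquivalent P E F := by
  constructor
  · filter_upwards [hF, hFE] with ε hε hFE using hε.trans_le (measure_mono_ae hFE)
  · have hratio : Tendsto (fun ε ↦ P (symmDiff (E ε) (F ε)) / P (E ε)) (𝓝[>] 0) (𝓝 0) := by
      have hhalf : (0 : ℝ≥0∞) < 2⁻¹ := ENNReal.inv_pos.2 ENNReal.ofNat_ne_top
      have hp2 : Tendsto (fun ε ↦ 2 * p ε) (𝓝[>] 0) (𝓝 0) := by
        simpa using ENNReal.Tendsto.const_mul hp (.inr ENNReal.ofNat_ne_top)
      refine tendsto_of_tendsto_of_tendsto_of_le_of_le' tendsto_const_nhds hp2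
        (.of_forall fun _ ↦ zero_le) ?_
      filter_upwards [hFE, hEG, hGF, hp.eventually_le_const hhalf]
        with ε hFE hEG hGF hp
      exact ENNReal.div_le_of_le_mul (measure_symmDiff_le_of_ae_sandwich hFE hEG hGF hp)
    simpa only [ENNReal.toReal_div, ENNReal.toReal_zero, Function.comp_def]
      using (ENNReal.tendsto_toReal ENNReal.zero_ne_top).comp hratio

end Sandwich

section Ottaviani

variable {Ω : Type*} [MeasurableSpace Ω] {P : Measure Ω} {Z : Ω → ℝ} {v : ℝ} {p : ℝ≥0∞}

theorem measure_first_lt_inter_le {ι : Type*} [Preorder ι] {X : ι → Ω → ℝ} {u : ι → ℝ} {a : ι}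
    (hind : IndepFun (fun ω (r : Iic a) ↦ X r ω) (fun ω ↦ Z ω - X a ω) P)
    (hp : P {ω | Z ω - X a ω ≤ v - u a} ≤ p) {S : Finset ι} (haS : ∀ s ∈ S, s < a) :
    P (({ω | u a < X a ω} \ ⋃ s ∈ S, {ω | u s < X s ω}) ∩ {ω | Z ω ≤ v}) ≤
      p * P ({ω | u a < X a ω} \ ⋃ s ∈ S, {ω | u s < X s ω}) := by
  set N : Set Ω := {ω | u a < X a ω} \ ⋃ s ∈ S, {ω | u s < X s ω} with hN
  set D : Set (Iic a → ℝ) :=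
    {f | u a < f ⟨a, le_rfl⟩} \ ⋃ s : S, {f | u s < f ⟨s, (haS s s.2).le⟩} with hD
  have hDmeas : MeasurableSet D :=
    (measurableSet_lt measurable_const (measurable_pi_apply _)).diff
      (.iUnion fun s ↦ measurableSet_lt measurable_const (measurable_pi_apply _))
  have hND : N = (fun ω (r : Iic a) ↦ X r ω) ⁻¹' D := by
    ext ω
    simp [hN, hD]
  calc P (N ∩ {ω | Z ω ≤ v})
      ≤ P (N ∩ (fun ω ↦ Z ω - X a ω) ⁻¹' Iic (v - u a)) := by
        refine measure_mono fun ω ⟨hωN, (hωv : Z ω ≤ v)⟩ ↦ ⟨hωN, ?_⟩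
        have hωa : u a < X a ω := hωN.1
        exact sub_le_sub hωv hωa.le
    _ = P N * P ((fun ω ↦ Z ω - X a ω) ⁻¹' Iic (v - u a)) := by
        rw [hND, hind.measure_inter_preimage_eq_mul _ _ hDmeas measurableSet_Iic]
    _ ≤ p * P N := by
        rw [mul_comm]
        gcongr
        exact hp

variable {ι : Type*} [LinearOrder ι] {X : ι → Ω → ℝ} {u : ι → ℝ}

theorem measure_biUnion_finset_lt_inter_le (hX : ∀ s, AEMeasurable (X s) P)
    (hind : ∀ s, IndepFun (fun ω (r : Iic s) ↦ X r ω) (fun ω ↦ Z ω - X s ω) P)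
    (hp : ∀ s, P {ω | Z ω - X s ω ≤ v - u s} ≤ p) (S : Finset ι) :
    P ((⋃ s ∈ S, {ω | u s < X s ω}) ∩ {ω | Z ω ≤ v}) ≤ p * P (⋃ s ∈ S, {ω | u s < X s ω}) := by
  induction S using Finset.induction_on_max with
  | empty => simp
  | insert a S haS ih =>
    have hfirst := measure_first_lt_inter_le (hind a) (hp a) haS
    set U : Set Ω := ⋃ s ∈ S, {ω | u s < X s ω}
    set N : Set Ω := {ω | u a < X a ω} \ U
    have hUN : ⋃ s ∈ insert a S, {ω | u s < X s ω} = U ∪ N := by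
      rw [Finset.set_biUnion_insert, union_sdiff_self, union_comm]
    have hU : NullMeasurableSet U P :=
      .biUnion S.countable_toSet fun s _ ↦ nullMeasurableSet_lt aemeasurable_const (hX s)
    calc P ((⋃ s ∈ insert a S, {ω | u s < X s ω}) ∩ {ω | Z ω ≤ v})
        ≤ P (U ∩ {ω | Z ω ≤ v}) + P (N ∩ {ω | Z ω ≤ v}) := by
          rw [hUN, union_inter_distrib_right]
          exact measure_union_le _ _
      _ ≤ p * P U + p * P N := by gcongr
      _ = p * P (⋃ s ∈ insert a S, {ω | u s < X s ω}) := by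
          rw [hUN, measure_union₀' hU disjoint_sdiff_right.aedisjoint, mul_add]

theorem measure_iUnion_nat_lt_inter_le (hX : ∀ s, AEMeasurable (X s) P)
    (hind : ∀ s, IndepFun (fun ω (r : Iic s) ↦ X r ω) (fun ω ↦ Z ω - X s ω) P)
    (hp : ∀ s, P {ω | Z ω - X s ω ≤ v - u s} ≤ p) (τ : ℕ → ι) :
    P ((⋃ n, {ω | u (τ n) < X (τ n) ω}) ∩ {ω | Z ω ≤ v}) ≤
      p * P (⋃ n, {ω | u (τ n) < X (τ n) ω}) := by
  set A : ℕ → Set Ω := fun n ↦ {ω | u (τ n) < X (τ n) ω}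
  rw [← iUnion_accumulate, iUnion_inter, Monotone.measure_iUnion
    fun m n hmn ↦ inter_subset_inter_left _ (monotone_accumulate hmn)]
  refine iSup_le fun n ↦ ?_
  calc P (accumulate A n ∩ {ω | Z ω ≤ v})
      ≤ p * P (accumulate A n) := by
        simpa only [Finset.set_biUnion_finset_image, Finset.mem_Iic, accumulate_def]
          using measure_biUnion_finset_lt_inter_le hX hind hp ((Finset.Iic n).image τ)
    _ ≤ p * P (⋃ n, accumulate A n) := by
        gcongr p * ?_
        exact measure_mono (subset_iUnion _ n)

/-- Ottaviani's inequality with a moving boundary `u`. -/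
theorem measure_exists_lt_inter_le [Nonempty ι] [TopologicalSpace ι]
    [TopologicalSpace.SeparableSpace ι] (hX : ∀ s, AEMeasurable (X s) P)
    (hXcont : ∀ᵐ ω ∂P, Continuous fun s ↦ X s ω) (hu : Continuous u)
    (hind : ∀ s, IndepFun (fun ω (r : Iic s) ↦ X r ω) (fun ω ↦ Z ω - X s ω) P)
    (hp : ∀ s, P {ω | Z ω - X s ω ≤ v - u s} ≤ p) :
    P ({ω | ∃ s, u s < X s ω} ∩ {ω | Z ω ≤ v}) ≤ p * P {ω | ∃ s, u s < X s ω} := by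
  set τ : ℕ → ι := TopologicalSpace.denseSeq ι
  have hdense : ({ω | ∃ s, u s < X s ω} : Set Ω) =ᵐ[P]
      (⋃ n, {ω | u (τ n) < X (τ n) ω} : Set Ω) := by
    filter_upwards [hXcont] with ω hω
    refine propext ⟨fun h ↦ ?_, fun h ↦ ?_⟩
    · obtain ⟨n, hn⟩ := (TopologicalSpace.denseRange_denseSeq ι).exists_mem_open
        (isOpen_lt hu hω) h
      exact mem_iUnion.2 ⟨n, hn⟩
    · obtain ⟨n, hn⟩ := mem_iUnion.1 h
      exact ⟨_, hn⟩
  rw [measure_congr (ae_eq_set_inter hdense (ae_eq_refl {ω | Z ω ≤ v})), measure_congr hdense]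
  exact measure_iUnion_nat_lt_inter_le hX hind hp τ

end Ottaviani

section Gaussian

variable {Ω : Type*} [MeasurableSpace Ω] {P : Measure Ω} {X : Ω → ℝ} {v : ℝ≥0}

theorem measure_le_neg_le_of_hasLaw_gaussianReal (hX : HasLaw X (gaussianReal 0 v) P) {a : ℝ}
    (ha : 0 < a) : P {ω | X ω ≤ -a} ≤ ENNReal.ofReal (v / a ^ 2) := by
  have := hX.isProbabilityMeasure
  have h := meas_ge_le_variance_div_sq hX.hasGaussianLaw.memLp_two ha
  rw [hX.variance_eq, variance_id_gaussianReal, hX.integral_eq, integral_id_gaussianReal] at h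
  simp only [sub_zero] at h
  exact (measure_mono fun ω hω ↦ (le_neg.1 hω).trans (neg_le_abs (X ω))).trans h

theorem measure_lt_pos_of_hasLaw_gaussianReal {m : ℝ} (hX : HasLaw X (gaussianReal m v) P)
    (hv : v ≠ 0) (a : ℝ) : 0 < P {ω | a < X ω} := by
  rw [hX.measure_eq (p := fun x ↦ a < x) measurableSet_Ioi]
  have := (gaussianReal_absolutelyContinuous' m hv).isOpenPosMeasure
  exact isOpen_Ioi.measure_pos _ nonempty_Ioi

end Gaussian

section Brownian

variable {Ω : Type*} [MeasurableSpace Ω] {P : Measure Ω}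

theorem IsBrownianMotion.isBrownianReal {B : ℝ → Ω → ℝ} (hB : IsBrownianMotion P B) :
    IsBrownianReal (fun t : ℝ≥0 ↦ B t) P := by
  obtain ⟨hmeas, hpath, hlaw, hind⟩ := hB
  have hincr : HasIndepIncrements (fun t : ℝ≥0 ↦ B t) P :=
    .of_nat fun t ht _ ↦ hind (fun i ↦ t i) (NNReal.coe_mono.comp ht) fun i ↦ (t i).2
  have hgauss (t : ℝ≥0) : HasLaw (B t) (gaussianReal 0 t) P := by
    have hsub : HasLaw (fun ω ↦ B t ω - B 0 ω) (gaussianReal 0 t) P :=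
      ⟨((hmeas t).sub (hmeas 0)).aemeasurable, by simpa using hlaw 0 t le_rfl t.2⟩
    refine hsub.congr ?_
    filter_upwards [hpath] with ω hω
    simp [hω.1]
  refine ⟨hincr.isPreBrownianReal_of_hasLaw hgauss, ?_⟩
  filter_upwards [hpath] with ω hω
  exact hω.2.comp_continuous NNReal.continuous_coe fun t ↦ t.2

theorem indepFun_past_sub_of_isPreBrownianReal {B : ℝ≥0 → Ω → ℝ} (hB : IsPreBrownianReal B P)
    {ι : Type*} [Preorder ι] {c : ι → ℝ≥0} (hc : Monotone c) {s : ι} {T : ℝ≥0} (hT : c s ≤ T) :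
    IndepFun (fun ω (r : Iic s) ↦ B (c r) ω) (fun ω ↦ B T ω - B (c s) ω) P := by
  have hpast : Measurable fun (f : Iic (c s) → ℝ) (r : Iic s) ↦ f ⟨c r, hc r.2⟩ :=
    measurable_pi_lambda _ fun _ ↦ measurable_pi_apply _
  have hshift : Measurable fun f : ℝ≥0 → ℝ ↦ f (T - c s) := measurable_pi_apply _
  simpa only [Function.comp_def, add_tsub_cancel_of_le hT]
    using (hB.indepFun_shift (c s)).symm.comp hpast hshift

end Brownian

/-- The time change `t ↦ ∫₀ᵗ e^{-2λs} ds` (for `λ ≠ 0`) turning Brownian motion into the noise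
accumulated by the linear diffusion `dX = λ X dt + ε dW`. -/
noncomputable def noiseClock (lam t : ℝ) : ℝ := (1 - Real.exp (-(2 * lam * t))) / (2 * lam)

/-- The path of `dX = λ X dt + ε dW` started at `x₀`, as a function of the path `b` of the Brownian
motion that drives it through `noiseClock`. -/
noncomputable def linearDiffusion (lam x₀ ε : ℝ) (b : ℝ → ℝ) (t : ℝ) : ℝ :=
  Real.exp (lam * t) * (x₀ + ε * b (noiseClock lam t))

section NoiseClock

variable {lam : ℝ}

theorem noiseClock_zero : noiseClock lam 0 = 0 := by simp [noiseClock]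

theorem continuous_noiseClock : Continuous (noiseClock lam) := by
  unfold noiseClock
  fun_prop

theorem monotone_noiseClock (hlam : 0 < lam) : Monotone (noiseClock lam) := by
  intro s t hst
  unfold noiseClock
  gcongr

theorem noiseClock_nonneg (hlam : 0 < lam) {t : ℝ} (ht : 0 ≤ t) : 0 ≤ noiseClock lam t :=
  noiseClock_zero.symm.trans_le (monotone_noiseClock hlam ht)

theorem one_div_sub_noiseClock (t : ℝ) :
    1 / (2 * lam) - noiseClock lam t = Real.exp (-(lam * t)) ^ 2 / (2 * lam) := by
  rw [noiseClock, ← sub_div, sub_sub_cancel, ← Real.exp_nat_mul]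
  congr 2
  push_cast
  ring

theorem noiseClock_le (hlam : 0 < lam) (t : ℝ) : noiseClock lam t ≤ 1 / (2 * lam) :=
  sub_nonneg.1 (by rw [one_div_sub_noiseClock]; positivity)

theorem tendsto_noiseClock (hlam : 0 < lam) :
    Tendsto (noiseClock lam) atTop (𝓝 (1 / (2 * lam))) := by
  have h : Tendsto (fun t ↦ Real.exp (-(2 * lam * t))) atTop (𝓝 0) :=
    Real.tendsto_exp_neg_atTop_nhds_zero.comp (tendsto_id.const_mul_atTop (by positivity))
  have hclock := (h.const_sub 1).div_const (2 * lam)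
  rwa [sub_zero] at hclock

end NoiseClock

section LinearDiffusion

variable {lam x₀ ε : ℝ}

theorem lt_linearDiffusion_iff (hε : 0 < ε) {b : ℝ → ℝ} {r t : ℝ} :
    r < linearDiffusion lam x₀ ε b t ↔
      (r * Real.exp (-(lam * t)) - x₀) / ε < b (noiseClock lam t) := by
  rw [linearDiffusion, ← div_lt_iff₀' (Real.exp_pos _), div_eq_mul_inv, ← Real.exp_neg,
    ← sub_lt_iff_lt_add', div_lt_iff₀' hε]

theorem pos_add_mul_iff (hε : 0 < ε) {y : ℝ} : 0 < x₀ + ε * y ↔ -x₀ / ε < y := by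
  rw [div_lt_iff₀' hε, neg_lt_iff_pos_add']

theorem tendsto_linearDiffusion_atTop (hlam : 0 < lam) {b : ℝ → ℝ}
    (hb : ContinuousOn b (Ici 0)) (hpos : 0 < x₀ + ε * b (1 / (2 * lam))) :
    Tendsto (linearDiffusion lam x₀ ε b) atTop atTop := by
  have hclock : Tendsto (noiseClock lam) atTop (𝓝[Ici 0] (1 / (2 * lam))) :=
    tendsto_nhdsWithin_iff.2 ⟨tendsto_noiseClock hlam,
      (eventually_ge_atTop 0).mono fun t ht ↦ noiseClock_nonneg hlam ht⟩
  have hexp : Tendsto (fun t ↦ Real.exp (lam * t)) atTop atTop :=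
    Real.tendsto_exp_atTop.comp (tendsto_id.const_mul_atTop hlam)
  have hend : (0 : ℝ) ≤ 1 / (2 * lam) := by positivity
  exact hexp.atTop_mul_pos hpos ((((hb _ hend).tendsto.comp hclock).const_mul ε).const_add x₀)

theorem exists_linearDiffusion_eq (hlam : 0 < lam) {b : ℝ → ℝ} (hb₀ : b 0 = 0)
    (hb : ContinuousOn b (Ici 0)) (hpos : 0 < x₀ + ε * b (1 / (2 * lam))) {q : ℝ} (hq : x₀ ≤ q) :
    ∃ t, 0 ≤ t ∧ linearDiffusion lam x₀ ε b t = q := by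
  have hcont : ContinuousOn (linearDiffusion lam x₀ ε b) (Ici 0) := by
    have hexp : Continuous fun t ↦ Real.exp (lam * t) := by fun_prop
    have hnoise : ContinuousOn (fun t ↦ b (noiseClock lam t)) (Ici 0) :=
      hb.comp continuous_noiseClock.continuousOn fun t ht ↦ noiseClock_nonneg hlam ht
    exact hexp.continuousOn.mul (continuousOn_const.add (continuousOn_const.mul hnoise))
  exact intermediate_value_Ici hcont (tendsto_linearDiffusion_atTop hlam hb hpos)
    (by simpa [linearDiffusion, noiseClock_zero, hb₀] using hq)

end LinearDiffusion

section Diffusion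

variable {Ω : Type*} [MeasurableSpace Ω] {P : Measure Ω} {B : ℝ → Ω → ℝ} {lam x₀ ε : ℝ}

theorem measure_sub_noiseClock_le (hB : IsPreBrownianReal (fun t : ℝ≥0 ↦ B t) P)
    (hlam : 0 < lam) {a t : ℝ} (ha : 0 < a) (ht : 0 ≤ t) :
    P {ω | B (1 / (2 * lam)) ω - B (noiseClock lam t) ω ≤ -(a * Real.exp (-(lam * t)))} ≤
      ENNReal.ofReal (1 / (2 * lam * a ^ 2)) := by
  have hT : 0 ≤ 1 / (2 * lam) := by positivity
  refine (measure_le_neg_le_of_hasLaw_gaussianReal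
    (hB.hasLaw_sub ⟨_, hT⟩ ⟨_, noiseClock_nonneg hlam ht⟩) (by positivity)).trans_eq ?_
  simp only [coe_nndist, Real.dist_eq, one_div_sub_noiseClock]
  rw [abs_of_pos (by positivity)]
  congr 1
  field_simp

theorem measure_exists_lt_linearDiffusion_diff_le
    (hB : IsBrownianReal (fun t : ℝ≥0 ↦ B t) P) (hlam : 0 < lam) (hε : 0 < ε) {r : ℝ} (hr : 0 < r) :
    P ({ω | ∃ t, 0 ≤ t ∧ r < linearDiffusion lam x₀ ε (B · ω) t} \
        {ω | 0 < x₀ + ε * B (1 / (2 * lam)) ω}) ≤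
      ENNReal.ofReal (ε ^ 2 / (2 * lam * r ^ 2)) *
        P {ω | ∃ t, 0 ≤ t ∧ r < linearDiffusion lam x₀ ε (B · ω) t} := by
  let c (t : ℝ≥0) : ℝ≥0 := ⟨noiseClock lam t, noiseClock_nonneg hlam t.2⟩
  have hc : Monotone c := fun s t hst ↦ monotone_noiseClock hlam hst
  let T : ℝ≥0 := ⟨1 / (2 * lam), by positivity⟩
  let u (t : ℝ≥0) : ℝ := (r * Real.exp (-(lam * t)) - x₀) / ε
  have hG : {ω | ∃ t, 0 ≤ t ∧ r < linearDiffusion lam x₀ ε (B · ω) t} =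
      {ω | ∃ t : ℝ≥0, u t < B (c t) ω} :=
    Set.ext fun ω ↦ ⟨fun ⟨t, ht, h⟩ ↦ ⟨⟨t, ht⟩, (lt_linearDiffusion_iff hε).1 h⟩,
      fun ⟨t, h⟩ ↦ ⟨t, t.2, (lt_linearDiffusion_iff hε).2 h⟩⟩
  have hFc : {ω | 0 < x₀ + ε * B (1 / (2 * lam)) ω}ᶜ = {ω | B T ω ≤ -x₀ / ε} :=
    Set.ext fun ω ↦ (pos_add_mul_iff hε).not.trans not_lt
  rw [Set.sdiff_eq, hFc, hG]
  refine measure_exists_lt_inter_le (fun t ↦ (hB.hasLaw_eval (c t)).aemeasurable) ?_ (by fun_prop)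
    (fun t ↦ indepFun_past_sub_of_isPreBrownianReal hB.toIsPreBrownianReal hc
      (noiseClock_le hlam t)) fun t ↦ ?_
  · filter_upwards [hB.cont] with ω hω
    exact hω.comp ((continuous_noiseClock.comp NNReal.continuous_coe).subtype_mk _)
  · have hgap : -x₀ / ε - u t = -(r / ε * Real.exp (-(lam * t))) := by ring
    have hrate : ε ^ 2 / (2 * lam * r ^ 2) = 1 / (2 * lam * (r / ε) ^ 2) := by field_simp
    rw [hgap, hrate]
    exact measure_sub_noiseClock_le hB.toIsPreBrownianReal hlam (div_pos hr hε) t.2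

theorem measure_endpoint_pos (hB : IsPreBrownianReal (fun t : ℝ≥0 ↦ B t) P) (hlam : 0 < lam)
    (hε : 0 < ε) : 0 < P {ω | 0 < x₀ + ε * B (1 / (2 * lam)) ω} := by
  have hT : 0 < 1 / (2 * lam) := by positivity
  simp only [pos_add_mul_iff hε]
  exact measure_lt_pos_of_hasLaw_gaussianReal (hB.hasLaw_eval ⟨_, hT.le⟩)
    (NNReal.coe_ne_zero.1 hT.ne') _

end Diffusion

theorem hitting_qp_equivalent_to_positive_limit_general
    {Ω : Type*} [MeasurableSpace Ω] (P : Measure Ω) (B : ℝ → Ω → ℝ) (hB : IsBrownianMotion P B)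
    (lam x₀ q : ℝ) (hlam : 0 < lam) (hx₀ : x₀ ≤ q) (hq : 0 < q) :
    AsympEquivalent P (fun ε ↦ {ω | ∃ t, 0 ≤ t ∧ linearDiffusion lam x₀ ε (B · ω) t = q})
      (fun ε ↦ {ω | 0 < x₀ + ε * B (1 / (2 * lam)) ω}) := by
  have hB' := hB.isBrownianReal
  have := hB'.isGaussianProcess.isProbabilityMeasure
  have hrate : Tendsto (fun ε : ℝ ↦ ENNReal.ofReal (ε ^ 2 / (2 * lam * (q / 2) ^ 2)))
      (𝓝[>] 0) (𝓝 0) :=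
    tendsto_nhdsWithin_of_tendsto_nhds
      ((ENNReal.continuous_ofReal.comp (by fun_prop)).tendsto' 0 0 (by simp))
  refine .of_ae_sandwich
    (G := fun ε ↦ {ω | ∃ t, 0 ≤ t ∧ q / 2 < linearDiffusion lam x₀ ε (B · ω) t}) hrate ?_ ?_ ?_ ?_
  all_goals filter_upwards [self_mem_nhdsWithin] with ε (hε : 0 < ε)
  · exact measure_endpoint_pos hB'.toIsPreBrownianReal hlam hε
  · filter_upwards [hB.2.1] with ω ⟨hB₀, hBcont⟩ hpos
    exact exists_linearDiffusion_eq hlam hB₀ hBcont hpos hx₀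
  · exact .of_forall fun ω ⟨t, ht, h⟩ ↦ ⟨t, ht, (half_lt_self hq).trans_eq h.symm⟩
  · exact measure_exists_lt_linearDiffusion_diff_le hB' hlam hε (half_pos hq)

/-- Lemma 5: for `λ > 0` and `q₋ < x₀ < 0 < q₊`, the families
`E_ε = {∃ t ≥ 0, X_ε(t) = q₊}` and `F_ε = {x₀ + ε B(1/(2λ)) > 0}` are asymptotically
equivalent as `ε → 0⁺`. -/
theorem hitting_qp_equivalent_to_positive_limit
    {Ω : Type*} [MeasurableSpace Ω] (P : Measure Ω) [IsProbabilityMeasure P]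
    (hPc : P.IsComplete)
    (B : ℝ → Ω → ℝ) (hB : IsBrownianMotion P B)
    (lam qm x₀ qp : ℝ) (hlam : 0 < lam) (hqm : qm < x₀) (hx₀ : x₀ < 0) (hqp : 0 < qp)
    (X : ℝ → ℝ → Ω → ℝ)
    (hX : ∀ ε t ω, X ε t ω
      = Real.exp (lam * t) * (x₀ + ε * B ((1 - Real.exp (-(2 * lam * t))) / (2 * lam)) ω))
    (E F : ℝ → Set Ω)
    (hE : ∀ ε, E ε = {ω | ∃ t : ℝ, 0 ≤ t ∧ X ε t ω = qp})
    (hF : ∀ ε, F ε = {ω | 0 < x₀ + ε * B (1 / (2 * lam)) ω}) :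
    AsympEquivalent P E F := by
  obtain ⟨rfl, rfl⟩ : _ ∧ _ := ⟨funext hE, funext hF⟩
  simpa only [hX, linearDiffusion, noiseClock] using
    hitting_qp_equivalent_to_positive_limit_general P B hB lam x₀ qp hlam (hx₀.trans hqp).le hqp
end
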